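/- Let n be a positive integer and let G = G_< be an ordered graph whose vertex set is partitioned as S ∪ T with S < T (every vertex of S precedes every vertex of T), |S| ≥ n/(6·log₂ n), and |T| ≥ n. Then either there exists a vertex v ∈ S such that |P(v,T)| ≥ n/12, or the complement of G contains a bi-clique of size at least n/(12·log₂ n). -/

import Mathlib

/-- A graph `G` contains a bi-clique of size at least `x`. -/
def HasBicliqueGe {V : Type*} (G : SimpleGraph V) (x : ℝ) : Prop :=
  ∃ A B : Finset V, Disjoint A B ∧ A.card = B.card ∧ x ≤ (A.card : ℝ) ∧
    ∀ a ∈ A, ∀ b ∈ B, G.Adj a b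

/-- `w` can be reached from `v` by a monotone `T`-path in the ordered graph `G`:
there is an increasing sequence `v < t₁ < t₂ < ⋯ < t_r = w` with all `tᵢ ∈ T`
and `v t₁, t₁ t₂, …, t_{r−1} t_r` edges of `G`. -/
def ReachMon {V : Type*} [LinearOrder V] (G : SimpleGraph V) (T : Set V) (v w : V) : Prop :=
  ∃ (r : ℕ) (p : Fin (r + 1) → V), StrictMono p ∧ (∀ i, p i ∈ T) ∧
    v < p 0 ∧ G.Adj v (p 0) ∧
    (∀ i : Fin r, G.Adj (p i.castSucc) (p i.succ)) ∧ p (Fin.last r) = w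

/-!
Write `m = ⌈n / (12 log₂ n)⌉`. If the complement has no bi-clique of size `m` then, for any `m`-set
`R` preceding a set `L`, fewer than `m` vertices of `L` have no neighbour in `R`. Start with a set
`A` of `m` vertices of `S`. Among the first `3m` vertices of `T`, more than `2m` are reached from
`A`, so one half of `A` reaches at least `m` of them, and these play the role of `R` for the rest of
`T`. Halving `A` in this way `⌈log₂ m⌉` times, at the cost of `3m` vertices of `T` each time, leaves
a single vertex which reaches all but `(3 ⌈log₂ m⌉ + 1) m ≤ 11n / 12 + 1` vertices of `T`.
-/

open Finset Relation

section Finset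

variable {α β : Type*}

lemma exists_initial_subset_card_eq [LinearOrder α] {L : Finset α} {j : ℕ} (hj : j ≤ #L) :
    ∃ K ⊆ L, #K = j ∧ ∀ x ∈ K, ∀ y ∈ L \ K, x < y := by
  induction L using Finset.induction_on_max with
  | empty => exact ⟨∅, by simp_all⟩
  | insert a L hmax ih =>
    have ha : a ∉ L := fun h => (hmax a h).false
    rcases hj.eq_or_lt with rfl | hlt
    · exact ⟨insert a L, by simp⟩
    obtain ⟨K, hKL, hK, hKlt⟩ := ih (by grind)
    refine ⟨K, hKL.trans (subset_insert a L), hK, fun x hx y hy => ?_⟩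
    obtain rfl | hyL := mem_insert.1 (mem_sdiff.1 hy).1
    · exact hmax x (hKL hx)
    · exact hKlt x hx y (mem_sdiff.2 ⟨hyL, (mem_sdiff.1 hy).2⟩)

open scoped Classical in
lemma exists_half_dominating_half (p : α → β → Prop) (A : Finset α) (X : Finset β)
    (hp : ∀ x ∈ X, ∃ a ∈ A, p a x) :
    ∃ B ⊆ A, #B ≤ (#A + 1) / 2 ∧ #X ≤ 2 * #{x ∈ X | ∃ b ∈ B, p b x} := by
  obtain ⟨B, hBA, hB⟩ := exists_subset_card_eq (Nat.div_le_self #A 2)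
  have hBc : #(A \ B) = #A - #A / 2 := by rw [card_sdiff_of_subset hBA, hB]
  have hX : X = {x ∈ X | ∃ b ∈ B, p b x} ∪ {x ∈ X | ∃ b ∈ A \ B, p b x} := by
    grind
  have hcard := (congrArg card hX).trans_le (card_union_le _ _)
  rcases le_total #{x ∈ X | ∃ b ∈ A \ B, p b x} #{x ∈ X | ∃ b ∈ B, p b x} with h | h
  · exact ⟨B, hBA, by lia, by lia⟩
  · exact ⟨A \ B, sdiff_subset, by lia, by lia⟩

end Finset

section LinksForward

variable {V : Type*} [LinearOrder V] {r : V → V → Prop} {m : ℕ} {L : Finset V}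

/-- Whenever `m` vertices precede `m` vertices of `L`, some `r`-edge goes from the former to the
latter: the expansion property of an ordered graph whose complement has no bi-clique of size `m`
with one side entirely before the other. -/
def LinksForward (r : V → V → Prop) (m : ℕ) (L : Finset V) : Prop :=
  ∀ A B : Finset V, #A = m → #B = m → B ⊆ L → (∀ a ∈ A, ∀ b ∈ B, a < b) →
    ∃ a ∈ A, ∃ b ∈ B, r a b

lemma LinksForward.mono (h : LinksForward r m L) {K : Finset V} (hK : K ⊆ L) :
    LinksForward r m K :=
  fun A B hA hB hBK => h A B hA hB (hBK.trans hK)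

open scoped Classical in
lemma LinksForward.card_filter_not_lt (h : LinksForward r m L) {R : Finset V} (hR : m ≤ #R)
    (hRL : ∀ x ∈ R, ∀ l ∈ L, x < l) : #{l ∈ L | ¬∃ x ∈ R, r x l} < m := by
  by_contra! hm
  obtain ⟨A, hAR, hA⟩ := exists_subset_card_eq hR
  obtain ⟨B, hB', hB⟩ := exists_subset_card_eq hm
  obtain ⟨a, ha, b, hb, hab⟩ := h A B hA hB (hB'.trans (filter_subset _ L)) fun a ha b hb =>
    hRL a (hAR ha) b (mem_filter.1 (hB' hb)).1
  exact (mem_filter.1 (hB' hb)).2 a (hAR ha) hab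

open scoped Classical in
lemma LinksForward.card_filter_not_transGen_lt (h : LinksForward r m L) {A R : Finset V}
    (hR : m ≤ #R) (hRL : ∀ x ∈ R, ∀ l ∈ L, x < l)
    (hAR : ∀ x ∈ R, ∃ a ∈ A, ReflTransGen r a x) :
    #{l ∈ L | ¬∃ a ∈ A, TransGen r a l} < m := by
  refine (card_le_card ?_).trans_lt (h.card_filter_not_lt hR hRL)
  refine monotone_filter_right L fun l _ => mt fun ⟨x, hx, hxl⟩ => ?_
  obtain ⟨a, ha, hax⟩ := hAR x hx
  exact ⟨a, ha, TransGen.tail' hax hxl⟩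

open scoped Classical in
lemma LinksForward.exists_half_reaching (h : LinksForward r m L) (hL : 3 * m ≤ #L)
    {A R : Finset V} (hR : m ≤ #R) (hRL : ∀ x ∈ R, ∀ l ∈ L, x < l)
    (hAR : ∀ x ∈ R, ∃ a ∈ A, ReflTransGen r a x) :
    ∃ B ⊆ A, #B ≤ (#A + 1) / 2 ∧ m ≤ #{l ∈ L | ∃ b ∈ B, TransGen r b l} := by
  obtain ⟨B, hBA, hB, hhalf⟩ := exists_half_dominating_half (TransGen r) A
    {l ∈ L | ∃ a ∈ A, TransGen r a l} fun l hl => (mem_filter.1 hl).2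
  have hunreached := h.card_filter_not_transGen_lt hR hRL hAR
  have hsplit := card_filter_add_card_filter_not (s := L) (fun l => ∃ a ∈ A, TransGen r a l)
  have hmono := card_le_card
    (filter_subset_filter (∃ b ∈ B, TransGen r b ·) (filter_subset (∃ a ∈ A, TransGen r a ·) L))
  exact ⟨B, hBA, hB, by lia⟩

open scoped Classical in
theorem LinksForward.exists_card_filter_not_transGen_lt (h : LinksForward r m L) (k : ℕ)
    {A R : Finset V} (hA : #A ≤ 2 ^ k) (hR : m ≤ #R) (hRL : ∀ x ∈ R, ∀ l ∈ L, x < l)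
    (hAR : ∀ x ∈ R, ∃ a ∈ A, ReflTransGen r a x) :
    ∃ a ∈ A, #{l ∈ L | ¬TransGen r a l} < (3 * k + 1) * m := by
  have hm : 0 < m := (Nat.zero_le _).trans_lt (h.card_filter_not_lt hR hRL)
  have source_nonempty {A R : Finset V} (hR : m ≤ #R)
      (hAR : ∀ x ∈ R, ∃ a ∈ A, ReflTransGen r a x) : A.Nonempty := by
    obtain ⟨x, hx⟩ : R.Nonempty := card_pos.1 (hm.trans_le hR)
    exact (hAR x hx).imp fun _ ha => ha.1
  induction k generalizing A R L with
  | zero =>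
    obtain ⟨a, ha⟩ := source_nonempty hR hAR
    obtain rfl : A = {a} := eq_singleton_iff_unique_mem.2
      ⟨ha, fun b hb => card_le_one.1 hA b hb a ha⟩
    exact ⟨a, ha, by simpa using h.card_filter_not_transGen_lt hR hRL hAR⟩
  | succ k ih =>
    rcases lt_or_ge #L (3 * m) with hsmall | hlarge
    · obtain ⟨a, ha⟩ := source_nonempty hR hAR
      exact ⟨a, ha, (card_filter_le _ _).trans_lt (hsmall.trans_le (by gcongr; lia))⟩
    obtain ⟨K, hKL, hK, hKlt⟩ := exists_initial_subset_card_eq hlarge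
    obtain ⟨B, hBA, hB, hBK⟩ := (h.mono hKL).exists_half_reaching hK.ge hR
      (fun x hx l hl => hRL x hx l (hKL hl)) hAR
    obtain ⟨b, hb, hbL⟩ := ih (A := B) (h.mono sdiff_subset) (by rw [pow_succ] at hA; lia) hBK
      (fun x hx => hKlt x (mem_of_mem_filter x hx))
      (fun x hx => (mem_filter.1 hx).2.imp fun _ hb => ⟨hb.1, hb.2.to_reflTransGen⟩)
    refine ⟨b, hBA hb, ?_⟩
    calc #{l ∈ L | ¬TransGen r b l}
        ≤ #(K ∪ {l ∈ L \ K | ¬TransGen r b l}) := card_le_card (by grind)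
      _ ≤ #K + #{l ∈ L \ K | ¬TransGen r b l} := card_union_le _ _
      _ < 3 * m + (3 * k + 1) * m := by lia
      _ = (3 * (k + 1) + 1) * m := by ring

end LinksForward

lemma HasBicliqueGe.mono {V : Type*} {G : SimpleGraph V} {x y : ℝ} (h : HasBicliqueGe G y)
    (hxy : x ≤ y) : HasBicliqueGe G x := by
  obtain ⟨A, B, hdisj, hcard, hy, hadj⟩ := h
  exact ⟨A, B, hdisj, hcard, hxy.trans hy, hadj⟩

section MonotonePath

variable {V : Type*} [LinearOrder V] {G : SimpleGraph V} {T : Set V} {v w : V}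

/-- A single step of a monotone `T`-path, whose transitive closure is `ReachMon`. -/
def MonStep (G : SimpleGraph V) (T : Set V) (v w : V) : Prop :=
  w ∈ T ∧ v < w ∧ G.Adj v w

lemma ReachMon.of_monStep (h : MonStep G T v w) : ReachMon G T v w :=
  ⟨0, fun _ => w, Subsingleton.strictMono (α := Fin 1) _, fun _ => h.1, h.2.1, h.2.2,
    fun i => i.elim0, rfl⟩

lemma ReachMon.head {u : V} (hstep : MonStep G T v u) (h : ReachMon G T u w) :
    ReachMon G T v w := by
  obtain ⟨k, p, hp, hpT, hlt, hadj, hpadj, rfl⟩ := h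
  refine ⟨k + 1, Matrix.vecCons u p, strictMono_vecCons.2 ⟨hlt, hp⟩, ?_, hstep.2.1, hstep.2.2, ?_,
    rfl⟩
  · exact Fin.forall_fin_succ.2 ⟨hstep.1, hpT⟩
  · exact Fin.forall_fin_succ.2 ⟨hadj, hpadj⟩

lemma reachMon_iff_transGen : ReachMon G T v w ↔ TransGen (MonStep G T) v w := by
  refine ⟨?_, fun h => ?_⟩
  · rintro ⟨k, p, hp, hpT, hv, hadj, hpadj, rfl⟩
    induction Fin.last k using Fin.induction with
    | zero => exact .single ⟨hpT 0, hv, hadj⟩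
    | succ i ih => exact ih.tail ⟨hpT _, hp Fin.castSucc_lt_succ, hpadj i⟩
  · induction h using TransGen.head_induction_on with
    | single hstep => exact .of_monStep hstep
    | head hstep _ ih => exact ih.head hstep

lemma ReachMon.mem (h : ReachMon G T v w) : w ∈ T := by
  obtain ⟨k, p, -, hpT, -, -, -, rfl⟩ := h
  exact hpT _

open scoped Classical in
lemma ncard_setOf_reachMon_add_card_filter_not (G : SimpleGraph V) (T : Finset V) (v : V) :
    {w | ReachMon G (T : Set V) v w}.ncard + #{w ∈ T | ¬TransGen (MonStep G T) v w} = #T := by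
  have hreached : {w | ReachMon G (T : Set V) v w} =
      ({w ∈ T | TransGen (MonStep G T) v w} : Finset V) := by
    ext w
    simpa [← reachMon_iff_transGen] using fun h : ReachMon G T v w => h.mem
  rw [hreached, Set.ncard_coe_finset, card_filter_add_card_filter_not]

lemma linksForward_monStep_or_hasBicliqueGe_compl (G : SimpleGraph V) (T : Finset V) (m : ℕ) :
    LinksForward (MonStep G T) m T ∨ HasBicliqueGe Gᶜ m := by
  refine or_iff_not_imp_left.2 fun h => ?_
  simp only [LinksForward, not_forall, not_exists, not_and] at h
  obtain ⟨A, B, hA, hB, hBT, hlt, hAB⟩ := h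
  refine ⟨A, B, disjoint_left.2 fun a ha hb => (hlt a ha a hb).false, hA.trans hB.symm,
    by rw [hA], fun a ha b hb => ?_⟩
  have hab := hlt a ha b hb
  exact (G.compl_adj a b).2 ⟨hab.ne, fun hadj => hAB a ha b hb ⟨hBT hb, hab, hadj⟩⟩

theorem exists_card_lt_ncard_reachMon_add_or_hasBicliqueGe_compl (G : SimpleGraph V)
    {S T : Finset V} {m : ℕ} (hlt : ∀ s ∈ S, ∀ t ∈ T, s < t) (hm : m ≤ #S) :
    (∃ v ∈ S, #T < {w | ReachMon G (T : Set V) v w}.ncard + (3 * Nat.clog 2 m + 1) * m) ∨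
      HasBicliqueGe Gᶜ m := by
  classical
  refine (linksForward_monStep_or_hasBicliqueGe_compl G T m).imp_left fun hlink => ?_
  obtain ⟨A, hAS, hA⟩ := exists_subset_card_eq hm
  obtain ⟨v, hv, hvT⟩ := hlink.exists_card_filter_not_transGen_lt (Nat.clog 2 m)
    (hA.trans_le (Nat.le_pow_clog one_lt_two m)) hA.ge (fun a ha => hlt a (hAS ha))
    (fun a ha => ⟨a, ha, .refl⟩)
  exact ⟨v, hAS hv, by linarith [ncard_setOf_reachMon_add_card_filter_not G T v]⟩

end MonotonePath

section Real

lemma natClog_two_le_logb {x : ℝ} {m : ℕ} (hm : 0 < m) (hmx : 2 * m ≤ x) :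
    (Nat.clog 2 m : ℝ) ≤ Real.logb 2 x := by
  have hm' : (0 : ℝ) < m := mod_cast hm
  calc (Nat.clog 2 m : ℝ) = ⌈Real.logb (2 : ℕ) m⌉₊ := by rw [Real.natCeil_logb_natCast]
    _ ≤ Real.logb 2 m + 1 :=
      (Nat.ceil_lt_add_one (Real.logb_nonneg one_lt_two (mod_cast hm))).le
    _ = Real.logb 2 (2 * m) := by
      rw [Real.logb_mul two_ne_zero hm'.ne', Real.logb_self_eq_one one_lt_two, add_comm]
    _ ≤ Real.logb 2 x := Real.logb_le_logb_of_le one_lt_two (by positivity) hmx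

lemma one_le_logb_two_of_two_le {x : ℝ} (hx : 2 ≤ x) : 1 ≤ Real.logb 2 x := by
  rwa [Real.le_logb_iff_rpow_le one_lt_two (by linarith), Real.rpow_one]

lemma three_mul_clog_add_one_mul_ceil_le {n : ℝ} (hn : 2 ≤ n) {m : ℕ}
    (hm : m = ⌈n / (12 * Real.logb 2 n)⌉₊) :
    (3 * Nat.clog 2 m + 1) * (m : ℝ) ≤ 11 / 12 * n + 1 := by
  have hlog := one_le_logb_two_of_two_le hn
  set x := n / (12 * Real.logb 2 n) with hx
  have hxlog : x * Real.logb 2 n = n / 12 := by rw [hx]; field_simp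
  have hx0 : 0 < x := by positivity
  rcases le_or_gt x 1 with hx1 | hx1
  · have hm1 : m ≤ 1 := hm ▸ Nat.ceil_le.2 (by simpa using hx1)
    have hm1' : (m : ℝ) ≤ 1 := mod_cast hm1
    rw [Nat.clog_of_right_le_one hm1]
    push_cast
    linarith
  have hxn : x ≤ n / 12 := by nlinarith
  have hmx : (m : ℝ) < x + 1 := hm ▸ Nat.ceil_lt_add_one hx0.le
  have hm0 : 0 < m := hm ▸ Nat.ceil_pos.2 hx0
  have hclog := natClog_two_le_logb (x := n) hm0 (by linarith)
  calc (3 * Nat.clog 2 m + 1) * (m : ℝ) = 3 * (m * Nat.clog 2 m) + m := by ring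
    _ ≤ 3 * (2 * x * Real.logb 2 n) + (x + 1) := by gcongr; linarith
    _ = n / 2 + (x + 1) := by linear_combination 6 * hxlog
    _ ≤ 11 / 12 * n + 1 := by linarith

end Real

theorem path_lemma_general {V : Type*} [LinearOrder V] (G : SimpleGraph V) (S T : Finset V)
    (n : ℝ) (hn : 2 ≤ n) (hlt : ∀ s ∈ S, ∀ t ∈ T, s < t)
    (hS : n / (6 * Real.logb 2 n) ≤ #S) (hT : n ≤ #T) :
    (∃ v ∈ S, n / 12 ≤ {w : V | ReachMon G (T : Set V) v w}.ncard) ∨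
      HasBicliqueGe Gᶜ (n / (12 * Real.logb 2 n)) := by
  have hlog := one_le_logb_two_of_two_le hn
  obtain ⟨m, hm⟩ : ∃ m, m = ⌈n / (12 * Real.logb 2 n)⌉₊ := ⟨_, rfl⟩
  have hmS : m ≤ #S := hm ▸ Nat.ceil_le.2 (le_trans (by gcongr; norm_num) hS)
  rcases exists_card_lt_ncard_reachMon_add_or_hasBicliqueGe_compl G hlt hmS with
    ⟨v, hv, hvT⟩ | hbiclique
  · refine .inl ⟨v, hv, ?_⟩
    have hloss := three_mul_clog_add_one_mul_ceil_le hn hm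
    rify [Nat.lt_iff_add_one_le] at hvT
    linarith
  · exact .inr (hbiclique.mono (hm ▸ Nat.le_ceil _))

/-- Let `G` be an ordered graph on the vertex set `S ∪ T` with `S < T`,
`|S| ≥ n/(6 log₂ n)` and `|T| ≥ n`. Then either some `v ∈ S` satisfies
`|P(v,T)| ≥ n/12`, or the complement of `G` contains a bi-clique of size
at least `n/(12 log₂ n)`. -/
theorem path_lemma {V : Type*} [Fintype V] [LinearOrder V]
    (G : SimpleGraph V) (S T : Finset V) (n : ℕ) (hn : 0 < n)
    (hunion : S ∪ T = Finset.univ) (hdisj : Disjoint S T)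
    (hlt : ∀ s ∈ S, ∀ t ∈ T, s < t)
    (hS : (n : ℝ) / (6 * Real.logb 2 n) ≤ (S.card : ℝ))
    (hT : (n : ℝ) ≤ (T.card : ℝ)) :
    (∃ v ∈ S, (n : ℝ) / 12 ≤ ({w : V | ReachMon G (↑T) v w}.ncard : ℝ)) ∨
      HasBicliqueGe Gᶜ ((n : ℝ) / (12 * Real.logb 2 n)) := by
  obtain rfl | hn2 : n = 1 ∨ 2 ≤ n := by lia
  · -- `log₂ 1 = 0`, so the bi-clique bound is the junk value `1 / 0 = 0`.
    exact .inr ⟨∅, ∅, by simp⟩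
  · exact path_lemma_general G S T n (mod_cast hn2) hlt hS hT
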